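/- Consider the chain Bell scenario with n binary ±1 observables per party and chain quantity β_chain(p) = Σ_{k=1}^{n−1}(⟨A_kB_k⟩ + ⟨A_kB_{k+1}⟩) + ⟨A_nB_n⟩ − ⟨A_nB_1⟩. For every bipartite no-signaling box p in which Bob's observable B₁ is deterministic (Bob's marginal output distribution at y = 1 is a point mass), β_chain(p) ≤ 2n − 2; moreover this bound is attained. Consequently, since the maximal no-signaling value of β_chain is 2n, the relevance of B₁ for the chain inequality is w_chain = 2n − (2n − 2) = 2. -/

import Mathlib

open Finset

/-- The sign `±1` associated with a binary output. -/
def sgn (b : Bool) : ℝ := if b then 1 else -1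

/-- A bipartite no-signaling box with binary outputs. -/
def IsNSBox {n m : ℕ} (p : Bool → Bool → Fin n → Fin m → ℝ) : Prop :=
  (∀ a b x y, 0 ≤ p a b x y) ∧
  (∀ x y, ∑ a, ∑ b, p a b x y = 1) ∧
  (∀ a x y y', ∑ b, p a b x y = ∑ b, p a b x y') ∧
  (∀ b y x x', ∑ a, p a b x y = ∑ a, p a b x' y)

/-- The correlator `⟨A_x B_y⟩` of a bipartite box with binary `±1` outputs. -/
def corr {n m : ℕ} (p : Bool → Bool → Fin n → Fin m → ℝ)
    (x : Fin n) (y : Fin m) : ℝ :=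
  ∑ a, ∑ b, sgn a * sgn b * p a b x y

/-- Bob's observable `B₁` (input `y = 1`) is deterministic. -/
def DetB1 {n m : ℕ} (hm : 0 < m) (p : Bool → Bool → Fin n → Fin m → ℝ) : Prop :=
  ∃ b0 : Bool, ∀ x b, (∑ a, p a b x ⟨0, hm⟩) = if b = b0 then 1 else 0

/-- The chain Bell quantity
`β_chain = Σ_{k=1}^{n−1}(⟨A_kB_k⟩ + ⟨A_kB_{k+1}⟩) + ⟨A_nB_n⟩ − ⟨A_nB_1⟩`. -/
def chainBell {n : ℕ} (hn : 0 < n) (p : Bool → Bool → Fin n → Fin n → ℝ) : ℝ :=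
  (∑ i : Fin (n - 1),
    (corr p ⟨i.1, by have := i.2; omega⟩ ⟨i.1, by have := i.2; omega⟩ +
      corr p ⟨i.1, by have := i.2; omega⟩ ⟨i.1 + 1, by have := i.2; omega⟩)) +
  corr p ⟨n - 1, by omega⟩ ⟨n - 1, by omega⟩ - corr p ⟨n - 1, by omega⟩ ⟨0, hn⟩

lemma ns_aux {n : ℕ} (hn : 0 < n) (p : Bool → Bool → Fin n → Fin n → ℝ)
    (h : IsNSBox p) (hd : DetB1 hn p) :
    ∃ f g : Fin n → ℝ, (∀ x y, corr p x y ≤ 1 + f x - g y) ∧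
      (∀ x y, corr p x y ≤ 1 - f x + g y) ∧ g ⟨0, hn⟩ = 1 ∧
      (∀ x, corr p x ⟨0, hn⟩ = f x) := by
  obtain ⟨h0, h1, h2, h3⟩ := h
  obtain ⟨b0, hb⟩ := hd
  refine ⟨fun x => sgn b0 * ∑ a, ∑ b, sgn a * p a b x ⟨0, hn⟩,
    fun y => sgn b0 * ∑ a, ∑ b, sgn b * p a b ⟨0, hn⟩ y, ?_, ?_, ?_, ?_⟩
  · intro x y
    have e1 := h1 x y
    have e2 := h2 true x y ⟨0, hn⟩
    have e3 := h2 false x y ⟨0, hn⟩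
    have e4 := h3 true y x ⟨0, hn⟩
    have e5 := h3 false y x ⟨0, hn⟩
    have p1 := h0 true false x y
    have p2 := h0 false true x y
    cases b0 <;> simp [corr, sgn] at * <;> linarith
  · intro x y
    have e1 := h1 x y
    have e2 := h2 true x y ⟨0, hn⟩
    have e3 := h2 false x y ⟨0, hn⟩
    have e4 := h3 true y x ⟨0, hn⟩
    have e5 := h3 false y x ⟨0, hn⟩
    have p1 := h0 true false x y
    have p2 := h0 false true x y
    cases b0 <;> simp [corr, sgn] at * <;> linarith
  · have e1 := hb ⟨0, hn⟩ true
    have e2 := hb ⟨0, hn⟩ false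
    cases b0 <;> simp [sgn] at * <;> linarith
  · intro x
    have e1 := hb x true
    have e2 := hb x false
    have p1 := h0 true false x ⟨0, hn⟩
    have p2 := h0 false true x ⟨0, hn⟩
    have p3 := h0 true true x ⟨0, hn⟩
    have p4 := h0 false false x ⟨0, hn⟩
    cases b0 <;> simp [corr, sgn] at * <;> linarith

/-- The maximum of the chain Bell quantity over no-signaling boxes in which `B₁` is
deterministic equals `2n − 2` (the bound holds and is attained); consequently, the maximal
no-signaling value being `2n`, the relevance of `B₁` for the chain inequality is
`w_chain = 2n − (2n − 2) = 2`. -/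
theorem chain_relevance {n : ℕ} (hn : 0 < n) :
    IsGreatest {v : ℝ | ∃ p : Bool → Bool → Fin n → Fin n → ℝ,
        IsNSBox p ∧ DetB1 hn p ∧ v = chainBell hn p} (2 * (n : ℝ) - 2) ∧
      2 * (n : ℝ) - (2 * (n : ℝ) - 2) = 2 := by
  refine ⟨⟨?_, ?_⟩, by ring⟩
  · refine ⟨fun a b _ _ => if a = true ∧ b = true then 1 else 0, ⟨?_, ?_, ?_, ?_⟩, ⟨true, ?_⟩, ?_⟩
    · intro a b x y
      dsimp only
      split_ifs <;> norm_num
    · intro x y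
      simp only [Fintype.sum_bool]
      norm_num
    · intro a x y y'
      rfl
    · intro a x y y'
      rfl
    · intro x b
      cases b <;> simp
    · obtain ⟨m, rfl⟩ : ∃ m, n = m + 1 := ⟨n - 1, by omega⟩
      simp [chainBell, corr, sgn]
      ring
  · rintro v ⟨p, hp, hd, rfl⟩
    obtain ⟨f, g, hf, hg, hg0, hf0⟩ := ns_aux hn p hp hd
    obtain ⟨m, rfl⟩ : ∃ m, n = m + 1 := ⟨n - 1, by omega⟩
    let G : ℕ → ℝ := fun k => if h : k < m + 1 then g ⟨k, h⟩ else 0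
    have hG : ∀ k (h : k < m + 1), g ⟨k, h⟩ = G k := by
      intro k h
      show _ = dite _ _ _
      rw [dif_pos h]
    unfold chainBell
    have key : (∑ i : Fin (m + 1 - 1),
        (corr p ⟨i.1, by have := i.2; omega⟩ ⟨i.1, by have := i.2; omega⟩ +
          corr p ⟨i.1, by have := i.2; omega⟩ ⟨i.1 + 1, by have := i.2; omega⟩))
        ≤ ∑ i : Fin (m + 1 - 1), (2 + (G (i.1 + 1) - G i.1)) := by
      apply Finset.sum_le_sum
      intro i _
      have hi : i.1 < m := by have := i.2; omega
      have a1 := hf ⟨i.1, by omega⟩ ⟨i.1, by omega⟩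
      have a2 := hg ⟨i.1, by omega⟩ ⟨i.1 + 1, by omega⟩
      rw [hG] at a1 a2
      linarith
    have key2 : ∑ i : Fin (m + 1 - 1), (2 + (G (i.1 + 1) - G i.1)) = 2 * (m : ℝ) + (G m - G 0) := by
      rw [Fin.sum_univ_eq_sum_range (fun i => 2 + (G (i + 1) - G i)) (m + 1 - 1),
        Finset.sum_add_distrib, Finset.sum_range_sub]
      simp
      ring
    have a3 := hf ⟨m + 1 - 1, by omega⟩ ⟨m + 1 - 1, by omega⟩
    have a4 := hf0 ⟨m + 1 - 1, by omega⟩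
    rw [hG] at a3 hg0
    simp only [Nat.add_sub_cancel] at *
    push_cast
    linarith
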